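/- arXiv:1102.0874 — 2 statements merged into one kernel-verified Lean document; each statement's English description precedes it below -/
import Mathlib

section
/- Let a finite 2-colored sequence of n points have b major and w minor points with Δ := b − w ≥ 0, and let r be the number of runs of major points (maximal intervals of major points). If n ≥ k, r ≤ k and Δ ≤ k for an integer k, then the major points can be covered by a set D of exactly k pairwise disjoint bodies such that d₀₀ − d₁₁ = Δ, where d₀₀ (d₁₁) is the number of bodies in D with no head and no tail (with both head and tail), and the bodies of D together cover all major points. -/
/-- The number of runs of major (`true`) points of a chain, given as the number of
positions where a maximal interval of major points starts. -/
def countRuns (C : List Bool) : ℕ :=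
  ((List.range C.length).filter
    (fun i => decide (C.getD i false = true ∧ (i = 0 ∨ C.getD (i - 1) false = false)))).length

/-- A body of the chain `C`: a nonempty interval (given by its first and last
positions) all of whose inner points are major (`true`). -/
def IsBody (C : List Bool) (p : ℕ × ℕ) : Prop :=
  p.1 ≤ p.2 ∧ p.2 < C.length ∧ ∀ i, p.1 < i → i < p.2 → C.getD i false = true

/-!
Start from the cover of the major points by `r` bodies, one per run. Splitting runs gives any number
`t` of major-containing bodies between `r` and `b`. For any `s ≤ min r w`, `s` of the minor points
can be attached to these bodies as heads or tails, and any `a ≤ w - s` of the other minor points can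
be added as bodies of their own. This is a cover by `a + t` bodies with `d₀₀ - d₁₁ = t - a - s`, and
the hypotheses on `k` make `a + t = k`, `t - a - s = b - w` solvable within these ranges. That the
three choices can be made independently is shown by scanning the chain from right to left.
-/

section CountRuns

theorem countRuns_cons (x : Bool) (C : List Bool) :
    countRuns (x :: C) = x.toNat + ((List.range C.length).filter
      (fun i => decide (C.getD i false = true ∧ (x :: C).getD i false = false))).length := by
  simp only [countRuns, List.length_cons, List.range_succ_eq_map, List.filter_cons,
    List.filter_map]
  cases x <;> simp [Function.comp_def, Nat.add_comm]

@[simp]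
theorem countRuns_nil : countRuns [] = 0 := rfl

theorem countRuns_singleton (x : Bool) : countRuns [x] = x.toNat := by
  simp [countRuns_cons]

-- Runs are counted by their last points here, by their first points in `countRuns`.
theorem countRuns_cons_cons (x y : Bool) (C : List Bool) :
    countRuns (x :: y :: C) = (x && !y).toNat + countRuns (y :: C) := by
  rw [countRuns_cons x, countRuns_cons y, List.length_cons, List.range_succ_eq_map,
    List.filter_cons, List.filter_map]
  cases x <;> cases y <;> simp [Function.comp_def, Nat.add_comm]

@[simp]
theorem countRuns_false_cons (C : List Bool) : countRuns (false :: C) = countRuns C := by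
  cases C <;> simp [countRuns_singleton, countRuns_cons_cons]

@[simp]
theorem countRuns_true_false_cons (C : List Bool) :
    countRuns (true :: false :: C) = countRuns C + 1 := by
  simp [countRuns_cons_cons, Nat.add_comm]

@[simp]
theorem countRuns_true_true_cons (C : List Bool) :
    countRuns (true :: true :: C) = countRuns (true :: C) := by
  simp [countRuns_cons_cons]

theorem countRuns_le_count_true : ∀ C : List Bool, countRuns C ≤ C.count true
  | [] => le_rfl
  | [true] => le_rfl
  | true :: true :: C => by simpa using Nat.le_succ_of_le (countRuns_le_count_true (true :: C))
  | true :: false :: C => by simpa using countRuns_le_count_true C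
  | false :: C => by simpa using countRuns_le_count_true C

theorem countRuns_le_count_false_add_one : ∀ C : List Bool, countRuns C ≤ C.count false + 1
  | [] => Nat.zero_le _
  | [true] => le_rfl
  | true :: true :: C => by simpa using countRuns_le_count_false_add_one (true :: C)
  | true :: false :: C => by simpa using countRuns_le_count_false_add_one C
  | false :: C => by simpa using Nat.le_succ_of_le (countRuns_le_count_false_add_one C)

theorem count_true_eq_zero_of_countRuns_eq_zero :
    ∀ {C : List Bool}, countRuns C = 0 → C.count true = 0
  | [], _ => rfl
  | [true], h => absurd h one_ne_zero
  | true :: true :: C, h => by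
    have ih := count_true_eq_zero_of_countRuns_eq_zero (C := true :: C) (by simpa using h)
    simp at ih
  | true :: false :: C, h => by simp at h
  | false :: C, h => by
    simpa using count_true_eq_zero_of_countRuns_eq_zero (C := C) (by simpa using h)

end CountRuns

/-- The number of major endpoints of an interval minus one (both endpoints of a one-point interval
count). The sum over a set of intervals is `d₀₀ - d₁₁`. -/
def endBalance (C : List Bool) (p : ℕ × ℕ) : ℤ :=
  (C.getD p.1 false).toNat + (C.getD p.2 false).toNat - 1

theorem sum_endBalance (C : List Bool) (D : Finset (ℕ × ℕ)) :
    ∑ p ∈ D, endBalance C p =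
      ((D.filter (fun p => C.getD p.1 false = true ∧ C.getD p.2 false = true)).card : ℤ)
        - ((D.filter (fun p => C.getD p.1 false = false ∧ C.getD p.2 false = false)).card : ℤ) := by
  rw [Finset.natCast_card_filter, Finset.natCast_card_filter, ← Finset.sum_sub_distrib]
  refine Finset.sum_congr rfl fun p _ => ?_
  rw [endBalance]
  cases C.getD p.1 false <;> cases C.getD p.2 false <;> rfl

theorem IsBody.extend_left {C : List Bool} {i m : ℕ} (h : IsBody C (i + 1, m))
    (ht : C.getD (i + 1) false = true) : IsBody C (i, m) := by
  obtain ⟨him, hm, hinner⟩ := h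
  refine ⟨Nat.le_of_succ_le him, hm, fun j hij hjm => ?_⟩
  obtain rfl | hij := (Nat.succ_le_of_lt hij).eq_or_lt
  exacts [ht, hinner j hij hjm]

/-- `D` is a set of pairwise disjoint bodies of `C`, none of which starts before position `i`,
covering all major points of `C` from position `i` on. -/
structure IsBodyCoverFrom (C : List Bool) (i : ℕ) (D : Finset (ℕ × ℕ)) : Prop where
  isBody : ∀ p ∈ D, IsBody C p
  le_fst : ∀ p ∈ D, i ≤ p.1
  disjoint : ∀ p ∈ D, ∀ q ∈ D, p ≠ q → p.2 < q.1 ∨ q.2 < p.1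
  covers : ∀ j, i ≤ j → j < C.length → C.getD j false = true → ∃ p ∈ D, p.1 ≤ j ∧ j ≤ p.2

namespace IsBodyCoverFrom

variable {C : List Bool} {i m : ℕ} {D : Finset (ℕ × ℕ)}

theorem empty (hi : C.length ≤ i) : IsBodyCoverFrom C i ∅ where
  isBody := by simp
  le_fst := by simp
  disjoint := by simp
  covers j hj hjC := by omega

theorem skip (h : IsBodyCoverFrom C (i + 1) D) (hi : C.getD i false = false) :
    IsBodyCoverFrom C i D where
  isBody := h.isBody
  le_fst p hp := (Nat.le_succ i).trans (h.le_fst p hp)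
  disjoint := h.disjoint
  covers j hij hj hjt := by
    have hne : i ≠ j := by rintro rfl; exact absurd (hi.symm.trans hjt) Bool.false_ne_true
    exact h.covers j (by omega) hj hjt

theorem insert (h : IsBodyCoverFrom C (m + 1) D) (hb : IsBody C (i, m)) :
    IsBodyCoverFrom C i (insert (i, m) D) where
  isBody := Finset.forall_mem_insert .. |>.2 ⟨hb, h.isBody⟩
  le_fst := Finset.forall_mem_insert .. |>.2
    ⟨le_rfl, fun p hp => (Nat.le_succ_of_le hb.1).trans (h.le_fst p hp)⟩
  disjoint p hp q hq hpq := by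
    obtain rfl | hp := Finset.mem_insert.1 hp <;> obtain rfl | hq := Finset.mem_insert.1 hq
    · exact absurd rfl hpq
    · exact .inl (h.le_fst q hq)
    · exact .inr (h.le_fst p hp)
    · exact h.disjoint p hp q hq hpq
  covers j hij hj hjt := by
    obtain hjm | hmj := le_or_gt j m
    · exact ⟨(i, m), Finset.mem_insert_self .., hij, hjm⟩
    · obtain ⟨p, hp, hpj⟩ := h.covers j hmj hj hjt
      exact ⟨p, Finset.mem_insert_of_mem hp, hpj⟩

theorem exists_fst_eq (h : IsBodyCoverFrom C i D) (hi : i < C.length)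
    (ht : C.getD i false = true) : ∃ m, (i, m) ∈ D := by
  obtain ⟨⟨l, m⟩, hp, hli, -⟩ := h.covers i le_rfl hi ht
  obtain rfl : l = i := le_antisymm hli (h.le_fst _ hp)
  exact ⟨m, hp⟩

theorem erase (h : IsBodyCoverFrom C i D) (hm : (i, m) ∈ D) :
    IsBodyCoverFrom C (m + 1) (D.erase (i, m)) where
  isBody p hp := h.isBody p (Finset.mem_of_mem_erase hp)
  le_fst p hp := by
    obtain ⟨hne, hp⟩ := Finset.mem_erase.1 hp
    exact (h.disjoint p hp _ hm hne).resolve_left fun hpi =>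
      (hpi.trans_le (h.le_fst p hp)).not_ge (h.isBody p hp).1
  disjoint p hp q hq := h.disjoint p (Finset.mem_of_mem_erase hp) q (Finset.mem_of_mem_erase hq)
  covers j hmj hj hjt := by
    have hij : i ≤ j := (h.isBody _ hm).1.trans (Nat.le_of_succ_le hmj)
    obtain ⟨p, hp, hpj⟩ := h.covers j hij hj hjt
    have hne : p ≠ (i, m) := by rintro rfl; exact hpj.2.not_gt hmj
    exact ⟨p, Finset.mem_erase.2 ⟨hne, hp⟩, hpj⟩

end IsBodyCoverFrom

/-- From position `i` on, the major points of `C` have a cover by `k` disjoint bodies with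
`d₀₀ - d₁₁ = e`. -/
def HasBodyCoverFrom (C : List Bool) (i k : ℕ) (e : ℤ) : Prop :=
  ∃ D, IsBodyCoverFrom C i D ∧ D.card = k ∧ ∑ p ∈ D, endBalance C p = e

namespace HasBodyCoverFrom

variable {C : List Bool} {i m k : ℕ} {e : ℤ}

theorem empty (hi : C.length ≤ i) : HasBodyCoverFrom C i 0 0 :=
  ⟨∅, .empty hi, rfl, rfl⟩

theorem skip (h : HasBodyCoverFrom C (i + 1) k e) (hi : C.getD i false = false) :
    HasBodyCoverFrom C i k e :=
  let ⟨D, hD, hk, he⟩ := h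
  ⟨D, hD.skip hi, hk, he⟩

theorem insert (h : HasBodyCoverFrom C (m + 1) k e) (hb : IsBody C (i, m)) :
    HasBodyCoverFrom C i (k + 1) (e + endBalance C (i, m)) := by
  obtain ⟨D, hD, rfl, rfl⟩ := h
  have hnot : (i, m) ∉ D := fun hp => (hD.le_fst _ hp).not_gt (Nat.lt_succ_of_le hb.1)
  exact ⟨_, hD.insert hb, Finset.card_insert_of_notMem hnot,
    by rw [Finset.sum_insert hnot, add_comm]⟩

theorem insert_singleton {x : Bool} (h : HasBodyCoverFrom C (i + 1) k e) (hi : i < C.length)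
    (hx : C.getD i false = x) : HasBodyCoverFrom C i (k + 1) (e + (2 * x.toNat - 1)) := by
  convert h.insert ⟨le_rfl, hi, fun _ hij hji => absurd hij hji.not_gt⟩ using 2
  rw [endBalance, hx]
  ring

theorem insert_pair (h : HasBodyCoverFrom C (i + 2) k e) (hi : i + 1 < C.length)
    (ht : C.getD i false = true) (hf : C.getD (i + 1) false = false) :
    HasBodyCoverFrom C i (k + 1) e := by
  convert h.insert ⟨Nat.le_succ i, hi, fun _ hij hji => absurd hij (Nat.le_of_lt_succ hji).not_gt⟩
  simp only [endBalance, ht, hf, Bool.toNat_true, Bool.toNat_false]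
  ring

theorem extend {x : Bool} (h : HasBodyCoverFrom C (i + 1) k e) (hi : i + 1 < C.length)
    (hx : C.getD i false = x) (ht : C.getD (i + 1) false = true) :
    HasBodyCoverFrom C i k (e + (x.toNat - 1)) := by
  obtain ⟨D, hD, rfl, rfl⟩ := h
  obtain ⟨m, hm⟩ := hD.exists_fst_eq hi ht
  have herase : HasBodyCoverFrom C (m + 1) _ _ := ⟨_, hD.erase hm, rfl, rfl⟩
  convert herase.insert ((hD.isBody _ hm).extend_left ht) using 1
  · exact (Finset.card_erase_add_one hm).symm
  · rw [← Finset.sum_erase_add D _ hm]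
    simp only [endBalance, hx, ht, Bool.toNat_true]
    ring

end HasBodyCoverFrom

/-- All covers from position `i` on that arise from `t` bodies containing a major point, with `s`
minor endpoints among them, and `a` minor singletons; only the number of bodies and the balance of
such a cover are recorded. In the intended use, the chain from `i` on has `r` runs, `b` major points
and `w` minor points. -/
def HasAllBodyCoversFrom (C : List Bool) (i r b w : ℕ) : Prop :=
  ∀ ⦃a t s : ℕ⦄, r ≤ t → t ≤ b → s ≤ r → a + s ≤ w → HasBodyCoverFrom C i (a + t) (t - a - s)

namespace HasAllBodyCoversFrom

variable {C : List Bool} {i r b w : ℕ}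

theorem empty (hi : C.length ≤ i) : HasAllBodyCoversFrom C i 0 0 0 := by
  intro a t s _ ht hs ha
  obtain ⟨rfl, rfl, rfl⟩ : a = 0 ∧ t = 0 ∧ s = 0 := by omega
  exact .empty hi

theorem last_major (hi : i < C.length) (hlast : C.length ≤ i + 1) (ht : C.getD i false = true) :
    HasAllBodyCoversFrom C i 1 1 0 := by
  intro a t s hrt htb hsr hasw
  obtain ⟨rfl, rfl, rfl⟩ : a = 0 ∧ t = 1 ∧ s = 0 := by omega
  exact (HasBodyCoverFrom.empty hlast).insert_singleton hi ht

theorem major_major (h : HasAllBodyCoversFrom C (i + 1) r b w) (hrb : r ≤ b)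
    (hi : i + 1 < C.length) (ht : C.getD i false = true) (ht' : C.getD (i + 1) false = true) :
    HasAllBodyCoversFrom C i r (b + 1) w := by
  intro a t s hrt htb hsr hasw
  obtain htb | rfl := htb.lt_or_eq
  · simpa using (h hrt (Nat.le_of_lt_succ htb) hsr hasw).extend hi ht ht'
  · convert (h hrb le_rfl hsr hasw).insert_singleton (Nat.lt_of_succ_lt hi) ht using 1
    · ring
    · push_cast [Bool.toNat_true]
      ring

theorem major_minor (h : HasAllBodyCoversFrom C (i + 1) r b (w + 1))
    (h' : HasAllBodyCoversFrom C (i + 2) r b w) (hi : i + 1 < C.length)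
    (ht : C.getD i false = true) (hf : C.getD (i + 1) false = false) :
    HasAllBodyCoversFrom C i (r + 1) (b + 1) (w + 1) := by
  intro a t s hrt htb hsr hasw
  obtain ⟨t, rfl⟩ := Nat.exists_eq_add_one.2 (Nat.zero_lt_of_lt hrt)
  rcases s with _ | s
  · convert (h (t := t) (by omega) (by omega) r.zero_le hasw).insert_singleton
      (Nat.lt_of_succ_lt hi) ht using 1
    · ring
    · push_cast [Bool.toNat_true]
      ring
  · convert (h' (a := a) (t := t) (s := s) (by omega) (by omega) (by omega) (by omega)).insert_pair
      hi ht hf using 1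
    · ring
    · push_cast
      ring

theorem minor (h : HasAllBodyCoversFrom C (i + 1) r b w) (hi : i < C.length)
    (hf : C.getD i false = false)
    (hrw : r ≤ w ∨ i + 1 < C.length ∧ C.getD (i + 1) false = true) :
    HasAllBodyCoversFrom C i r b (w + 1) := by
  intro a t s hrt htb hsr hasw
  rcases a with _ | a
  · by_cases hsw : s ≤ w
    · exact (h hrt htb hsr (by omega)).skip hf
    -- All remaining minor points must become ends, including the present one.
    · obtain ⟨hi', ht⟩ := hrw.resolve_left (by omega)
      obtain rfl : s = w + 1 := by omega
      convert (h (a := 0) (s := w) hrt htb (by omega) (by omega)).extend hi' hf ht using 1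
      push_cast [Bool.toNat_false]
      ring
  · convert (h (a := a) hrt htb hsr (by omega)).insert_singleton hi hf using 1
    · ring
    · push_cast [Bool.toNat_false]
      ring

end HasAllBodyCoversFrom

theorem drop_eq_cons_iff_getD {α : Type*} {C S : List α} {i : ℕ} {x : α} (d : α) :
    C.drop i = x :: S ↔ i < C.length ∧ C.getD i d = x ∧ C.drop (i + 1) = S := by
  obtain hi | hi := lt_or_ge i C.length
  · rw [List.drop_eq_getElem_cons hi, List.cons.injEq, List.getD_eq_getElem _ _ hi]
    exact (and_iff_right hi).symm
  · simp [List.drop_of_length_le hi, hi.not_gt]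

theorem hasAllBodyCoversFrom_of_drop_eq {C : List Bool} : ∀ {S : List Bool} {i : ℕ}, C.drop i = S →
    HasAllBodyCoversFrom C i (countRuns S) (S.count true) (S.count false)
  | [], _, hS => .empty (List.drop_eq_nil_iff.1 hS)
  | [true], _, hS => by
    obtain ⟨hi, ht, hlast⟩ := (drop_eq_cons_iff_getD false).1 hS
    exact .last_major hi (List.drop_eq_nil_iff.1 hlast) ht
  | true :: true :: S, _, hS => by
    obtain ⟨-, ht, hS⟩ := (drop_eq_cons_iff_getD false).1 hS
    obtain ⟨hi, ht', -⟩ := (drop_eq_cons_iff_getD false).1 hS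
    have h := hasAllBodyCoversFrom_of_drop_eq hS
    simpa using h.major_major (countRuns_le_count_true _) hi ht ht'
  | true :: false :: S, _, hS => by
    obtain ⟨-, ht, hS⟩ := (drop_eq_cons_iff_getD false).1 hS
    obtain ⟨hi, hf, hS'⟩ := (drop_eq_cons_iff_getD false).1 hS
    have h := hasAllBodyCoversFrom_of_drop_eq hS
    simp only [countRuns_false_cons, List.count_cons_self, List.count_cons_of_ne Bool.false_ne_true]
      at h
    simpa using h.major_minor (hasAllBodyCoversFrom_of_drop_eq hS') hi ht hf
  | false :: S, i, hS => by
    obtain ⟨hi, hf, hS⟩ := (drop_eq_cons_iff_getD false).1 hS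
    have hrw : countRuns S ≤ S.count false ∨ i + 1 < C.length ∧ C.getD (i + 1) false = true := by
      match S, hS with
      | [], _ => exact .inl le_rfl
      | true :: _, hS =>
        obtain ⟨hi', ht, -⟩ := (drop_eq_cons_iff_getD false).1 hS
        exact .inr ⟨hi', ht⟩
      | false :: S, _ => exact .inl (by simpa using countRuns_le_count_false_add_one S)
    simpa using (hasAllBodyCoversFrom_of_drop_eq hS).minor hi hf hrw

theorem exists_cover_parameters {b w r k : ℕ} (hrb : r ≤ b) (hb : r = 0 → b = 0)
    (hn : k ≤ b + w) (hr : r ≤ k) (hΔk : b ≤ k + w) (hrΔ : r + w ≤ k + b) :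
    ∃ a t s : ℕ, r ≤ t ∧ t ≤ b ∧ s ≤ r ∧ a + s ≤ w ∧ a + t = k ∧ (t - a - s : ℤ) = b - w := by
  -- `a` is as large as `r ≤ t` and `0 ≤ s` allow, so `t = r` or `s ≤ 1`.
  obtain ⟨a, ha⟩ : ∃ a, a = min (k - r) ((k + w - b) / 2) := ⟨_, rfl⟩
  refine ⟨a, k - a, k + w - b - 2 * a, ?_⟩
  omega

theorem cover_by_k_bodies_general (C : List Bool) (k : ℕ)
    (hn : k ≤ C.length)
    (hr : countRuns C ≤ k)
    (hΔk : C.count true ≤ k + C.count false)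
    (hrΔ : countRuns C + C.count false ≤ k + C.count true) :
    ∃ D : Finset (ℕ × ℕ),
      D.card = k ∧
      (∀ p ∈ D, IsBody C p) ∧
      (∀ p ∈ D, ∀ q ∈ D, p ≠ q → p.2 < q.1 ∨ q.2 < p.1) ∧
      (∀ i, i < C.length → C.getD i false = true → ∃ p ∈ D, p.1 ≤ i ∧ i ≤ p.2) ∧
      ((D.filter (fun p => C.getD p.1 false = true ∧ C.getD p.2 false = true)).card : ℤ)
          - ((D.filter (fun p => C.getD p.1 false = false ∧ C.getD p.2 false = false)).card : ℤ)
        = (C.count true : ℤ) - (C.count false : ℤ) := by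
  obtain ⟨a, t, s, hrt, htb, hsr, hasw, rfl, hΔ⟩ := exists_cover_parameters
    (countRuns_le_count_true C) count_true_eq_zero_of_countRuns_eq_zero
    (by rwa [List.count_true_add_count_false]) hr hΔk hrΔ
  obtain ⟨D, hD, hcard, hbalance⟩ : HasBodyCoverFrom C 0 (a + t) (t - a - s) :=
    hasAllBodyCoversFrom_of_drop_eq C.drop_zero hrt htb hsr hasw
  exact ⟨D, hcard, hD.isBody, hD.disjoint, fun i => hD.covers i i.zero_le,
    by rw [← sum_endBalance, hbalance, hΔ]⟩

/-- Let a 2-colored chain `C` (`true` = major, `false` = minor) have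
`b` major and `w` minor points with `Δ = b - w ≥ 0`, and `r` runs of major points.
If `|C| ≥ k`, `r ≤ k` and `Δ ≤ k`, then there are exactly `k` pairwise disjoint
bodies covering all major points such that `d₀₀ - d₁₁ = Δ`, where `d₀₀` (`d₁₁`)
counts the bodies with both endpoints major (resp. both endpoints minor). -/
theorem cover_by_k_bodies (C : List Bool) (k : ℕ)
    (hΔnonneg : C.count false ≤ C.count true)
    (hn : k ≤ C.length)
    (hr : countRuns C ≤ k)
    (hΔk : C.count true - C.count false ≤ k) :
    ∃ D : Finset (ℕ × ℕ),
      D.card = k ∧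
      (∀ p ∈ D, IsBody C p) ∧
      (∀ p ∈ D, ∀ q ∈ D, p ≠ q → p.2 < q.1 ∨ q.2 < p.1) ∧
      (∀ i, i < C.length → C.getD i false = true → ∃ p ∈ D, p.1 ≤ i ∧ i ≤ p.2) ∧
      ((D.filter (fun p => C.getD p.1 false = true ∧ C.getD p.2 false = true)).card : ℤ)
          - ((D.filter (fun p => C.getD p.1 false = false ∧ C.getD p.2 false = false)).card : ℤ)
        = (C.count true : ℤ) - (C.count false : ℤ) := by
  exact cover_by_k_bodies_general C k hn hr (by omega) (by omega)
end

section
/- If G is a bipartite planar graph on at least 5 vertices all of whose faces in every planar drawing are quadrilaterals (a quadrangulation), then for every set S of |V(G)| points in general position in the plane there exists a 2-coloring of S compatible with some proper 2-coloring of G such that G admits no straight-line plane embedding on S mapping each vertex to a distinct point of its color. -/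
/-- The straight-line drawing `f` of `G` is plane (non-crossing): vertices go to
distinct points, two edges sharing no endpoint are drawn as disjoint segments, and
two edges sharing exactly one endpoint meet only in the image of that endpoint. -/
def IsPlaneDrawing {V : Type*} (G : SimpleGraph V) (f : V → ℝ × ℝ) : Prop :=
  Function.Injective f ∧
    (∀ u v x y : V, G.Adj u v → G.Adj x y → u ≠ x → u ≠ y → v ≠ x → v ≠ y →
      segment ℝ (f u) (f v) ∩ segment ℝ (f x) (f y) = ∅) ∧
    (∀ u v w : V, G.Adj u v → G.Adj u w → v ≠ w →
      segment ℝ (f u) (f v) ∩ segment ℝ (f u) (f w) = {f u})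

/-!
Sweep a plane drawing by a line moving from left to right and record, from bottom to top, the left
endpoints of the edges it meets. Measure this sequence of vertices, with a fixed vertex attached at
either end, in the metric of the complete bipartite graph on the two color classes. When the line
passes a vertex `v`, the left neighbors of `v` occupy consecutive places in the sequence and are
replaced by copies of `v`; consecutive distinct left neighbors are at distance `2`, so the length
grows by at most `4` minus twice their number. Summing over all vertices bounds the number of edges
by `2 * |V|`, with savings at the leftmost, the rightmost and the lowest vertex. If these three
vertices have the same color, the savings leave at most `2 * |V| - 5` edges. So it suffices to give
one color to three points of `S` that are leftmost, rightmost and lowest in suitable linear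
coordinates.
-/

section ColorLength

variable {V β : Type*} [DecidableEq V] [DecidableEq β] {c : V → β}

/-- The distance of two vertices in the complete multipartite graph whose parts are the color
classes of `c`; it serves to compare the left endpoints of neighboring edges in a sweep. -/
def colorDist (c : V → β) (x y : V) : ℕ :=
  if x = y then 0 else if c x = c y then 2 else 1

/-- The length of a sequence of vertices with respect to `colorDist c`, which is the potential of
the sweep argument. -/
def colorLength (c : V → β) : List V → ℕ
  | [] => 0
  | [_] => 0
  | x :: y :: l => colorDist c x y + colorLength c (y :: l)

lemma colorDist_self (x : V) : colorDist c x x = 0 := if_pos rfl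

lemma colorDist_le_two (x y : V) : colorDist c x y ≤ 2 := by
  unfold colorDist; split_ifs <;> simp

lemma colorDist_of_color_ne {x y : V} (h : c x ≠ c y) : colorDist c x y = 1 := by
  rw [colorDist, if_neg (ne_of_apply_ne c h), if_neg h]

lemma colorDist_of_color_eq {x y : V} (hxy : x ≠ y) (h : c x = c y) : colorDist c x y = 2 := by
  rw [colorDist, if_neg hxy, if_pos h]

lemma colorDist_triangle (x y z : V) : colorDist c x z ≤ colorDist c x y + colorDist c y z := by
  grind [colorDist]

lemma colorLength_append_cons (X : List V) (x : V) (Q : List V) :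
    colorLength c (X ++ x :: Q) = colorLength c (X ++ [x]) + colorLength c (x :: Q) := by
  induction X using colorLength.induct with
  | case1 => simp [colorLength]
  | case2 => simp [colorLength]
  | case3 y z l ih => simp only [List.cons_append, colorLength] at ih ⊢; omega

lemma colorLength_append_cons_append_cons (X : List V) (x : V) (Y : List V) (z : V)
    (Z : List V) : colorLength c (X ++ x :: (Y ++ z :: Z)) =
      colorLength c (X ++ [x]) + colorLength c (x :: (Y ++ [z])) + colorLength c (z :: Z) := by
  rw [colorLength_append_cons, ← List.cons_append, colorLength_append_cons (x :: Y), add_assoc,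
    List.cons_append]

lemma colorLength_cons_replicate_append_le (x v z : V) (r : ℕ) :
    colorLength c (x :: (List.replicate r v ++ [z])) ≤ colorDist c x v + colorDist c v z := by
  induction r generalizing x with
  | zero => exact colorDist_triangle x v z
  | succ r ih => simpa [List.replicate_succ, colorLength, colorDist_self] using ih v

lemma exists_colorLength_cons_append_eq (y z : V) {Y : List V} (hY : (y :: Y).Nodup)
    (hc : ∀ w ∈ Y, c w = c y) :
    ∃ w ∈ y :: Y, colorLength c (y :: (Y ++ [z])) = 2 * Y.length + colorDist c w z := by
  induction Y generalizing y with
  | nil => exact ⟨y, by simp, by simp [colorLength]⟩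
  | cons w Y ih =>
    have hyw : colorDist c y w = 2 :=
      colorDist_of_color_eq (by grind) (hc w List.mem_cons_self).symm
    obtain ⟨u, hu, ih⟩ := ih w hY.of_cons (by grind)
    refine ⟨u, List.mem_cons_of_mem _ hu, ?_⟩
    rw [List.cons_append, colorLength, hyw, ih, List.length_cons]
    ring

end ColorLength

section Fan

variable {V : Type*} [DecidableEq V] {c : V → Bool} {v : V} {Y : List V}

lemma exists_colorLength_fan_eq (hY : Y.Nodup) (hc : ∀ y ∈ Y, c y ≠ c v) (hY₀ : Y ≠ [])
    (x z : V) : ∃ y ∈ Y, ∃ y' ∈ Y, colorLength c (x :: (Y ++ [z])) + 2 =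
      colorDist c x y + 2 * Y.length + colorDist c y' z := by
  obtain ⟨y, Y, rfl⟩ := List.exists_cons_of_ne_nil hY₀
  have hcy : ∀ w ∈ Y, c w = c y := fun w hw ↦
    (Bool.eq_not_of_ne (hc w (List.mem_cons_of_mem y hw))).trans
      (Bool.eq_not_of_ne (hc y List.mem_cons_self)).symm
  obtain ⟨y', hy', h⟩ := exists_colorLength_cons_append_eq y z hY hcy
  refine ⟨y, List.mem_cons_self, y', hy', ?_⟩
  rw [List.cons_append, colorLength, h, List.length_cons]
  ring

lemma colorDist_add_two_mul_length_le (hY : Y.Nodup) (hc : ∀ y ∈ Y, c y ≠ c v) (x z : V) :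
    colorDist c x v + colorDist c v z + 2 * Y.length ≤ colorLength c (x :: (Y ++ [z])) + 4 := by
  rcases eq_or_ne Y [] with rfl | hY₀
  · have := colorDist_le_two (c := c) x v
    have := colorDist_le_two (c := c) v z
    simp only [List.length_nil]
    omega
  · obtain ⟨y, hy, y', hy', h⟩ := exists_colorLength_fan_eq hY hc hY₀ x z
    have := colorDist_triangle (c := c) x y v
    have := colorDist_triangle (c := c) v y' z
    have := colorDist_of_color_ne (hc y hy)
    have := colorDist_of_color_ne (hc y' hy').symm
    omega

lemma colorDist_add_two_mul_length_le_of_left (hY : Y.Nodup) (hc : ∀ y ∈ Y, c y ≠ c v) {x : V}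
    (hx : c x = c v) (z : V) :
    colorDist c v z + 2 * Y.length ≤ colorLength c (x :: (Y ++ [z])) + 2 := by
  rcases eq_or_ne Y [] with rfl | hY₀
  · have := colorDist_le_two (c := c) v z
    simp only [List.length_nil]
    omega
  · obtain ⟨y, hy, y', hy', h⟩ := exists_colorLength_fan_eq hY hc hY₀ x z
    have := colorDist_triangle (c := c) v y' z
    have := colorDist_of_color_ne (hx.trans_ne (hc y hy).symm)
    have := colorDist_of_color_ne (hc y' hy').symm
    omega

lemma two_mul_length_le_colorLength (hY : Y.Nodup) (hc : ∀ y ∈ Y, c y ≠ c v) {x z : V}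
    (hx : c x = c v) (hz : c z = c v) : 2 * Y.length ≤ colorLength c (x :: (Y ++ [z])) := by
  rcases eq_or_ne Y [] with rfl | hY₀
  · exact Nat.zero_le _
  · obtain ⟨y, hy, y', hy', h⟩ := exists_colorLength_fan_eq hY hc hY₀ x z
    have := colorDist_of_color_ne (hx.trans_ne (hc y hy).symm)
    have := colorDist_of_color_ne (hz ▸ hc y' hy')
    omega

lemma colorLength_sweep_le (hY : Y.Nodup) (hc : ∀ y ∈ Y, c y ≠ c v) (m a : V) (X Z : List V)
    (r : ℕ) : colorLength c (m :: (X ++ List.replicate r v ++ Z ++ [a])) + 2 * Y.length ≤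
      colorLength c (m :: (X ++ Y ++ Z ++ [a])) + 4 := by
  obtain ⟨X', x, hX⟩ : ∃ X' x, m :: X = X' ++ [x] :=
    ⟨_, _, (List.dropLast_append_getLast (List.cons_ne_nil m X)).symm⟩
  obtain ⟨z, Z', hZ⟩ := List.exists_cons_of_ne_nil (List.concat_ne_nil a Z)
  have split (Q : List V) : colorLength c (m :: (X ++ Q ++ Z ++ [a])) =
      colorLength c (X' ++ [x]) + colorLength c (x :: (Q ++ [z])) + colorLength c (z :: Z') := by
    rw [← colorLength_append_cons_append_cons, ← hZ, List.append_cons X', ← hX]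
    simp only [List.cons_append, List.append_assoc]
  have hv := colorLength_cons_replicate_append_le (c := c) x v z r
  have hY' := colorDist_add_two_mul_length_le hY hc x z
  rw [split, split]
  omega

lemma colorLength_sweep_bottom_le (hY : Y.Nodup) (hc : ∀ y ∈ Y, c y ≠ c v) {m : V}
    (hm : c m = c v) (a : V) (Z : List V) (r : ℕ) :
    colorLength c (v :: (List.replicate r v ++ Z ++ [a])) + 2 * Y.length ≤
      colorLength c (m :: (Y ++ Z ++ [a])) + 2 := by
  obtain ⟨z, Z', hZ⟩ := List.exists_cons_of_ne_nil (List.concat_ne_nil a Z)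
  have split (x : V) (Q : List V) : colorLength c (x :: (Q ++ Z ++ [a])) =
      colorLength c (x :: (Q ++ [z])) + colorLength c (z :: Z') := by
    rw [List.append_assoc, hZ, ← List.cons_append, colorLength_append_cons, List.cons_append]
  have hv := colorLength_cons_replicate_append_le (c := c) v v z r
  have hY' := colorDist_add_two_mul_length_le_of_left hY hc hm z
  rw [colorDist_self] at hv
  rw [split, split]
  omega

end Fan

section Geometry

/-- Some point of `s` lies vertically below a point of `t`; this is the vertical order of edges
and vertices in a drawing. -/
def IsBelow (s t : Set (ℝ × ℝ)) : Prop :=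
  ∃ p ∈ s, ∃ q ∈ t, p.1 = q.1 ∧ p.2 < q.2

lemma injOn_fst_segment {p q : ℝ × ℝ} (h : p.1 ≠ q.1) : Set.InjOn Prod.fst (segment ℝ p q) := by
  rw [segment_eq_image_lineMap]
  rintro - ⟨r, -, rfl⟩ - ⟨r', -, rfl⟩ h'
  simp only [AffineMap.fst_lineMap] at h'
  rw [AffineMap.lineMap_injective ℝ h h']

lemma exists_mem_segment_fst_eq {p q : ℝ × ℝ} {x : ℝ} (hp : p.1 ≤ x) (hq : x ≤ q.1) :
    ∃ r ∈ segment ℝ p q, r.1 = x := by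
  have := image_segment ℝ (LinearMap.fst ℝ ℝ ℝ).toAffineMap p q
  simp only [LinearMap.coe_toAffineMap, LinearMap.fst_apply, segment_eq_Icc (hp.trans hq)] at this
  exact this.superset ⟨hp, hq⟩

lemma exists_mem_openSegment_inter {p q p' q' : ℝ × ℝ} (h₁ : p.1 = q.1) (h₂ : p.2 < q.2)
    (h₁' : p'.1 = q'.1) (h₂' : q'.2 < p'.2) :
    ∃ z, z ∈ openSegment ℝ p p' ∧ z ∈ openSegment ℝ q q' := by
  have hd : 0 < (q.2 - p.2) + (p'.2 - q'.2) := by linarith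
  set α := (p'.2 - q'.2) / ((q.2 - p.2) + (p'.2 - q'.2)) with hα
  set β := (q.2 - p.2) / ((q.2 - p.2) + (p'.2 - q'.2)) with hβ
  have hα₀ : 0 < α := div_pos (by linarith) hd
  have hβ₀ : 0 < β := div_pos (by linarith) hd
  have hαβ : α + β = 1 := by rw [hα, hβ]; field_simp; ring
  refine ⟨α • p + β • p', ⟨α, β, hα₀, hβ₀, hαβ, rfl⟩, α, β, hα₀, hβ₀, hαβ, ?_⟩
  refine Prod.ext (by simp [h₁, h₁']) ?_
  simp only [Prod.snd_add, Prod.smul_snd, smul_eq_mul, hα, hβ]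
  field_simp
  ring

lemma left_mem_extremePoints_segment {E : Type*} [AddCommGroup E] [Module ℝ E] (p q : E) :
    p ∈ (segment ℝ p q).extremePoints ℝ := by
  refine mem_extremePoints_iff_left.2 ⟨left_mem_segment ℝ p q, ?_⟩
  rw [segment_eq_image']
  rintro - ⟨r, ⟨hr, -⟩, rfl⟩ - ⟨r', ⟨hr', -⟩, rfl⟩ ⟨α, β, hα, hβ, hαβ, h⟩
  have h₀ : (α * r + β * r') • (q - p) = 0 := by
    have hp : (α + β) • p + (α * r + β * r') • (q - p) = p := Eq.trans (by module) h
    rwa [hαβ, one_smul, add_eq_left] at hp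
  rcases smul_eq_zero.1 h₀ with h₀ | h₀
  · have : r = 0 := by nlinarith [mul_nonneg hα.le hr, mul_nonneg hβ.le hr']
    simp [this]
  · simp [h₀]

lemma right_mem_extremePoints_segment {E : Type*} [AddCommGroup E] [Module ℝ E] (p q : E) :
    q ∈ (segment ℝ p q).extremePoints ℝ :=
  segment_symm ℝ p q ▸ left_mem_extremePoints_segment q p

lemma isBelow_singleton {s : Set (ℝ × ℝ)} {q : ℝ × ℝ} :
    IsBelow s {q} ↔ ∃ p ∈ s, p.1 = q.1 ∧ p.2 < q.2 := by
  simp [IsBelow]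

lemma snd_sub_eq_of_mem_segment {p q r : ℝ × ℝ} (h : p.1 < q.1) (hr : r ∈ segment ℝ p q) :
    r.2 - p.2 = (q.2 - p.2) / (q.1 - p.1) * (r.1 - p.1) := by
  rw [segment_eq_image'] at hr
  obtain ⟨t, -, rfl⟩ := hr
  have : q.1 - p.1 ≠ 0 := sub_ne_zero.2 h.ne'
  simp only [Prod.fst_add, Prod.snd_add, Prod.smul_fst, Prod.smul_snd, Prod.fst_sub, Prod.snd_sub,
    smul_eq_mul]
  field_simp
  ring

lemma isBelow_segment_of_slope_le {p q q' : ℝ × ℝ} (hq : p.1 < q.1) (hq' : p.1 < q'.1)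
    (hinter : segment ℝ p q ∩ segment ℝ p q' = {p})
    (h : (q.2 - p.2) / (q.1 - p.1) ≤ (q'.2 - p.2) / (q'.1 - p.1)) :
    IsBelow (segment ℝ p q) (segment ℝ p q') := by
  have hx : p.1 < min q.1 q'.1 := lt_min hq hq'
  obtain ⟨r, hr, hrx⟩ := exists_mem_segment_fst_eq hx.le (min_le_left q.1 q'.1)
  obtain ⟨r', hr', hrx'⟩ := exists_mem_segment_fst_eq hx.le (min_le_right q.1 q'.1)
  have hrr' : r.1 = r'.1 := hrx.trans hrx'.symm
  have hle : r.2 ≤ r'.2 := by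
    rw [← sub_le_sub_iff_right p.2, snd_sub_eq_of_mem_segment hq hr,
      snd_sub_eq_of_mem_segment hq' hr', hrr']
    exact mul_le_mul_of_nonneg_right h (by linarith)
  refine ⟨r, hr, r', hr', hrr', hle.lt_of_ne fun h' ↦ ?_⟩
  have hrp : r = p := hinter.subset ⟨hr, Prod.ext hrr' h' ▸ hr'⟩
  rw [hrp] at hrx
  exact hx.ne hrx

end Geometry

namespace IsPlaneDrawing

variable {V : Type*} {G : SimpleGraph V} {f : V → ℝ × ℝ} {u v w x : V} {z : ℝ × ℝ}

lemma eq_or_eq_of_mem_segment (hf : IsPlaneDrawing G f) (huv : G.Adj u v) (hwx : G.Adj w x)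
    (hne : s(u, v) ≠ s(w, x)) (hz : z ∈ segment ℝ (f u) (f v)) (hz' : z ∈ segment ℝ (f w) (f x)) :
    (z = f u ∨ z = f v) ∧ (z = f w ∨ z = f x) := by
  have fan {p q r : V} (hq : G.Adj p q) (hr : G.Adj p r) (hqr : q ≠ r)
      (h : z ∈ segment ℝ (f p) (f q)) (h' : z ∈ segment ℝ (f p) (f r)) : z = f p :=
    (hf.2.2 p q r hq hr hqr).subset ⟨h, h'⟩
  by_cases huw : u = w
  · subst huw
    have := fan huv hwx (by grind) hz hz'
    exact ⟨.inl this, .inl this⟩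
  by_cases hux : u = x
  · subst hux
    have := fan huv hwx.symm (by grind) hz (segment_symm ℝ (f w) _ ▸ hz')
    exact ⟨.inl this, .inr this⟩
  by_cases hvw : v = w
  · subst hvw
    have := fan huv.symm hwx (by grind) (segment_symm ℝ (f u) _ ▸ hz) hz'
    exact ⟨.inr this, .inl this⟩
  by_cases hvx : v = x
  · subst hvx
    have := fan huv.symm hwx.symm (by grind) (segment_symm ℝ (f u) _ ▸ hz)
      (segment_symm ℝ (f w) _ ▸ hz')
    exact ⟨.inr this, .inr this⟩
  · exact ((hf.2.1 u v w x huv hwx huw hux hvw hvx).subset ⟨hz, hz'⟩).elim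

lemma mem_extremePoints (hf : IsPlaneDrawing G f) (huv : G.Adj u v) (hwx : G.Adj w x)
    (hne : s(u, v) ≠ s(w, x)) (hz : z ∈ segment ℝ (f u) (f v)) (hz' : z ∈ segment ℝ (f w) (f x)) :
    z ∈ (segment ℝ (f u) (f v)).extremePoints ℝ := by
  rcases (hf.eq_or_eq_of_mem_segment huv hwx hne hz hz').1 with rfl | rfl
  exacts [left_mem_extremePoints_segment _ _, right_mem_extremePoints_segment _ _]

lemma eq_or_eq_of_apply_mem_segment (hf : IsPlaneDrawing G f) (huw : G.Adj u w)
    (hvx : G.Adj v x) (hv : f v ∈ segment ℝ (f u) (f w)) : v = u ∨ v = w := by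
  by_cases hne : s(u, w) = s(v, x)
  · exact Sym2.mem_iff.1 (hne ▸ Sym2.mem_mk_left v x)
  · exact (hf.eq_or_eq_of_mem_segment huw hvx hne hv (left_mem_segment ℝ _ _)).1.imp
      (@hf.1 _ _) (@hf.1 _ _)

-- If the vertical order of two segments flips, they cross in an interior point of both.
lemma not_isBelow_of_isBelow (hf : IsPlaneDrawing G f) (huv : G.Adj u v) (hwx : G.Adj w x)
    (hu : (f u).1 ≠ (f v).1)
    (h : IsBelow (segment ℝ (f u) (f v)) (segment ℝ (f w) (f x))) :
    ¬ IsBelow (segment ℝ (f w) (f x)) (segment ℝ (f u) (f v)) := by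
  rintro ⟨q', hq', p', hp', h₁', h₂'⟩
  obtain ⟨p, hp, q, hq, h₁, h₂⟩ := h
  by_cases hne : s(u, v) = s(w, x)
  · have hseg : segment ℝ (f w) (f x) = segment ℝ (f u) (f v) := by
      rcases Sym2.eq_iff.1 hne with ⟨rfl, rfl⟩ | ⟨rfl, rfl⟩
      exacts [rfl, segment_symm ℝ _ _]
    exact h₂.ne (congr_arg Prod.snd (injOn_fst_segment hu hp (hseg ▸ hq) h₁))
  · obtain ⟨z, hzp, hzq⟩ := exists_mem_openSegment_inter h₁ h₂ h₁'.symm h₂'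
    have hz := (convex_segment _ _).openSegment_subset hp hp' hzp
    have hz' := (convex_segment _ _).openSegment_subset hq hq' hzq
    have hpz : p = z := mem_extremePoints_iff_left.1
      (hf.mem_extremePoints huv hwx hne hz hz') |>.2 p hp p' hp' hzp
    have hqz : q = z := mem_extremePoints_iff_left.1
      (hf.mem_extremePoints hwx huv (Ne.symm hne) hz' hz) |>.2 q hq q' hq' hzq
    exact h₂.ne (by rw [hpz, hqz])

lemma comp (hf : IsPlaneDrawing G f) (T : ℝ × ℝ →ₗ[ℝ] ℝ × ℝ) (hT : Function.Injective T) :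
    IsPlaneDrawing G (T ∘ f) := by
  have hseg (p q : ℝ × ℝ) : segment ℝ (T p) (T q) = T '' segment ℝ p q :=
    (image_segment ℝ T.toAffineMap p q).symm
  refine ⟨hT.comp hf.1, fun u v x y huv hxy hux huy hvx hvy ↦ ?_, fun u v w huv huw hvw ↦ ?_⟩
  · simp only [Function.comp_apply, hseg, ← Set.image_inter hT,
      hf.2.1 u v x y huv hxy hux huy hvx hvy, Set.image_empty]
  · simp only [Function.comp_apply, hseg, ← Set.image_inter hT, hf.2.2 u v w huv huw hvw,
      Set.image_singleton]

end IsPlaneDrawing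

lemma filter_append_filter_not {α : Type*} (p : α → Prop) [DecidablePred p] {L : List α}
    (h : L.Pairwise fun a b ↦ p b → p a) : L.filter p ++ L.filter (¬ p ·) = L := by
  induction L with
  | nil => rfl
  | cons a L ih =>
    obtain ⟨ha, hL⟩ := List.pairwise_cons.1 h
    by_cases hpa : p a
    · simpa [hpa] using ih hL
    · have hnil : L.filter p = [] :=
        List.filter_eq_nil_iff.2 fun b hb ↦ by simpa using mt (ha b hb) hpa
      simpa [hpa, hnil] using ih hL

section Sweep

variable {V : Type*} [LinearOrder V] {G : SimpleGraph V} {f : V → ℝ × ℝ}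

/-- The neighbors of `v` in `G` that precede `v`, that is, lie to the left of `v` when the order
is that of first coordinates. Their numbers add up to the number of edges. -/
def leftNeighbors [Fintype V] (G : SimpleGraph V) [DecidableRel G.Adj] (v : V) : Finset V :=
  {u | G.Adj u v ∧ u < v}

lemma mem_leftNeighbors [Fintype V] [DecidableRel G.Adj] {u v : V} :
    u ∈ leftNeighbors G v ↔ G.Adj u v ∧ u < v := by
  simp [leftNeighbors]

lemma card_edgeFinset_eq_sum_card_leftNeighbors [Fintype V] [DecidableRel G.Adj]
    [Fintype G.edgeSet] : G.edgeFinset.card = ∑ v, (leftNeighbors G v).card := by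
  rw [← Finset.card_sigma]
  symm
  refine Finset.card_bij (fun e _ ↦ s(e.2, e.1)) ?_ ?_ fun e ↦ ?_
  · simp +contextual [mem_leftNeighbors]
  · rintro ⟨v, u⟩ h ⟨v', u'⟩ h' heq
    simp only [Finset.mem_sigma, mem_leftNeighbors] at h h'
    rcases Sym2.eq_iff.1 heq with ⟨rfl, rfl⟩ | ⟨rfl, rfl⟩
    · rfl
    · exact (h.2.2.asymm h'.2.2).elim
  · induction e with | _ u v
    intro h
    rw [SimpleGraph.mem_edgeFinset, SimpleGraph.mem_edgeSet] at h
    rcases h.ne.lt_or_gt with huv | hvu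
    · exact ⟨⟨v, u⟩, by simp [mem_leftNeighbors, h, huv], rfl⟩
    · exact ⟨⟨u, v⟩, by simp [mem_leftNeighbors, h.symm, hvu], Sym2.eq_swap⟩

/-- The segment representing the edge `e`, given by its ordered pair of endpoints, in the
straight-line drawing `f`. -/
abbrev edgeSegment (f : V → ℝ × ℝ) (e : V × V) : Set (ℝ × ℝ) := segment ℝ (f e.1) (f e.2)

/-- The combinatorial state of a sweep of the drawing `f` by a vertical line that has passed
exactly the vertices in `P`: the list `L` of the edges meeting the line, in order from bottom to
top, each oriented from left to right. -/
structure IsSweepState (G : SimpleGraph V) (f : V → ℝ × ℝ) (P : Finset V) (L : List (V × V)) :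
    Prop where
  mem_iff (e : V × V) : e ∈ L ↔ G.Adj e.1 e.2 ∧ e.1 ∈ P ∧ e.2 ∉ P
  pairwise_isBelow : L.Pairwise fun e e' ↦ IsBelow (edgeSegment f e) (edgeSegment f e')

variable (hf : IsPlaneDrawing G f) (hx : StrictMono fun v ↦ (f v).1)

include hx in
lemma exists_mem_edgeSegment_fst_eq {e : V × V} {v : V} (h₁ : e.1 ≤ v) (h₂ : v ≤ e.2) :
    ∃ p ∈ edgeSegment f e, p.1 = (f v).1 :=
  exists_mem_segment_fst_eq (hx.monotone h₁) (hx.monotone h₂)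

include hf hx in
lemma exists_right_fan [Finite V] (v : V) : ∃ R : List (V × V),
    (∀ e, e ∈ R ↔ G.Adj e.1 e.2 ∧ e.1 = v ∧ v < e.2) ∧
      R.Pairwise fun e e' ↦ IsBelow (edgeSegment f e) (edgeSegment f e') := by
  classical
  cases nonempty_fintype V
  let slope (w : V) : ℝ := ((f w).2 - (f v).2) / ((f w).1 - (f v).1)
  let W : Finset V := {w | G.Adj v w ∧ v < w}
  let r : V → V → Prop := slope ⁻¹'o (· ≤ ·)
  have hW (w : V) : w ∈ W.toList.insertionSort r ↔ G.Adj v w ∧ v < w := by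
    simp [W]
  refine ⟨(W.toList.insertionSort r).map (Prod.mk v), fun e ↦ ?_, ?_⟩
  · simp only [List.mem_map, hW]
    constructor
    · rintro ⟨w, ⟨hvw, hlt⟩, rfl⟩
      exact ⟨hvw, rfl, hlt⟩
    · rintro ⟨he, rfl, hlt⟩
      exact ⟨e.2, ⟨he, hlt⟩, rfl⟩
  · have hnodup : (W.toList.insertionSort r).Nodup :=
      (List.perm_insertionSort r _).nodup_iff.2 W.nodup_toList
    refine List.pairwise_map.2 <|
      ((List.pairwise_insertionSort r W.toList).and hnodup).imp_of_mem ?_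
    rintro w w' hw hw' ⟨hle, hne⟩
    rw [hW] at hw hw'
    exact isBelow_segment_of_slope_le (hx hw.2) (hx hw'.2)
      (hf.2.2 v w w' hw.1 hw'.1 hne) hle

include hf hx in
lemma snd_le_of_isBelow {e e' : V × V} (he : G.Adj e.1 e.2) (he' : G.Adj e'.1 e'.2)
    (h : IsBelow (edgeSegment f e) (edgeSegment f e')) {p q : ℝ × ℝ} (hp : p ∈ edgeSegment f e)
    (hq : q ∈ edgeSegment f e') (hpq : p.1 = q.1) : p.2 ≤ q.2 :=
  not_lt.1 fun hlt ↦ hf.not_isBelow_of_isBelow he he' (hx.injective.ne he.ne) h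
    ⟨q, hq, p, hp, hpq.symm, hlt⟩

include hx in
lemma eq_of_mem_edgeSegment {e : V × V} (he : e.1 ≠ e.2) {p q : ℝ × ℝ}
    (hp : p ∈ edgeSegment f e) (hq : q ∈ edgeSegment f e) (hpq : p.1 = q.1) : p = q :=
  injOn_fst_segment (hx.injective.ne he) hp hq hpq

namespace IsSweepState

variable {P : Finset V} {L : List (V × V)} {v : V}

include hf hx in
lemma nodup (hL : IsSweepState G f P L) : L.Nodup := by
  refine hL.pairwise_isBelow.imp_of_mem fun {e e'} he _ h ↦ ?_
  rintro rfl
  have he := ((hL.mem_iff e).1 he).1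
  exact hf.not_isBelow_of_isBelow he he (hx.injective.ne he.ne) h h

include hf hx in
lemma isBelow_singleton_of_isBelow (hL : IsSweepState G f P L) (hP : ∀ u, u ∈ P ↔ u < v)
    {e e' : V × V} (he : e ∈ L) (he' : e' ∈ L) (h : IsBelow (edgeSegment f e) (edgeSegment f e'))
    (h' : IsBelow (edgeSegment f e') {f v}) : IsBelow (edgeSegment f e) {f v} := by
  obtain ⟨hadj, he₁, he₂⟩ := (hL.mem_iff e).1 he
  obtain ⟨p', hp', hp'v, hlt⟩ := isBelow_singleton.1 h'
  rw [hP] at he₁ he₂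
  obtain ⟨p, hp, hpv⟩ := exists_mem_edgeSegment_fst_eq hx he₁.le (not_lt.1 he₂)
  have hle := snd_le_of_isBelow hf hx hadj ((hL.mem_iff e').1 he').1 h hp hp' (hpv.trans hp'v.symm)
  exact isBelow_singleton.2 ⟨p, hp, hpv, hle.trans_lt hlt⟩

include hf hx in
lemma isBelow_singleton_or_isBelow (hL : IsSweepState G f P L) (hP : ∀ u, u ∈ P ↔ u < v)
    {e : V × V} (he : e ∈ L) (hev : e.2 ≠ v) {w : V} (hvw : G.Adj v w) :
    IsBelow (edgeSegment f e) {f v} ∨ IsBelow {f v} (edgeSegment f e) := by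
  obtain ⟨hadj, he₁, he₂⟩ := (hL.mem_iff e).1 he
  rw [hP] at he₁ he₂
  obtain ⟨p, hp, hpv⟩ := exists_mem_edgeSegment_fst_eq hx he₁.le (not_lt.1 he₂)
  have hne : p.2 ≠ (f v).2 := fun h ↦ by
    rcases hf.eq_or_eq_of_apply_mem_segment hadj hvw (Prod.ext hpv h ▸ hp) with h | h
    exacts [he₁.ne' h, hev h.symm]
  exact hne.lt_or_gt.imp (fun h ↦ ⟨p, hp, f v, rfl, hpv, h⟩)
    fun h ↦ ⟨f v, rfl, p, hp, hpv.symm, h⟩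

include hf hx in
lemma exists_eq_append (hL : IsSweepState G f P L) (hP : ∀ u, u ∈ P ↔ u < v) :
    ∃ A B C, L = A ++ B ++ C ∧ (∀ e ∈ A, IsBelow (edgeSegment f e) {f v} ∧ e.2 ≠ v) ∧
      (∀ e ∈ B, e.2 = v) ∧ ∀ e ∈ C, ¬ IsBelow (edgeSegment f e) {f v} ∧ e.2 ≠ v := by
  classical
  let below (e : V × V) : Prop := IsBelow (edgeSegment f e) {f v}
  have hmono : L.Pairwise fun e e' ↦ below e' → below e :=
    hL.pairwise_isBelow.imp_of_mem fun he he' ↦ hL.isBelow_singleton_of_isBelow hf hx hP he he'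
  have hends : (L.filter (¬ below ·)).Pairwise fun e e' ↦ e'.2 = v → e.2 = v := by
    refine (hL.pairwise_isBelow.sublist List.filter_sublist).imp_of_mem ?_
    intro e e' he he' hlt he'v
    by_contra hev
    simp only [List.mem_filter, decide_eq_true_eq] at he he'
    have hadj' := ((hL.mem_iff e').1 he'.1).1
    obtain h | ⟨q, hq, p, hp, hqp, hlt'⟩ :=
      hL.isBelow_singleton_or_isBelow hf hx hP he.1 hev (he'v ▸ hadj'.symm)
    · exact he.2 h
    · obtain rfl : q = f v := hq
      exact hlt'.not_ge (snd_le_of_isBelow hf hx ((hL.mem_iff e).1 he.1).1 hadj' hlt hp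
        (he'v ▸ right_mem_segment ℝ _ _) hqp.symm)
  refine ⟨L.filter below, (L.filter (¬ below ·)).filter (·.2 = v),
    (L.filter (¬ below ·)).filter (¬ ·.2 = v), ?_, fun e he ↦ ?_,
    fun e he ↦ by simpa using (List.mem_filter.1 he).2, fun e he ↦ ?_⟩
  · rw [List.append_assoc, filter_append_filter_not _ hends, filter_append_filter_not _ hmono]
  · simp only [List.mem_filter, decide_eq_true_eq] at he
    refine ⟨he.2, ?_⟩
    rintro rfl
    obtain ⟨p, hp, hpv, hlt⟩ := isBelow_singleton.1 he.2
    have hadj := ((hL.mem_iff e).1 he.1).1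
    exact hlt.ne
      (congr_arg Prod.snd (eq_of_mem_edgeSegment hx hadj.ne hp (right_mem_segment ℝ _ _) hpv))
  · simp only [List.mem_filter, decide_eq_true_eq] at he
    exact ⟨he.1.2, he.2⟩

include hf hx in
lemma pass_vertex {A B C R : List (V × V)} (hL : IsSweepState G f P (A ++ B ++ C))
    (hP : ∀ u, u ∈ P ↔ u < v) (hA : ∀ e ∈ A, IsBelow (edgeSegment f e) {f v} ∧ e.2 ≠ v)
    (hB : ∀ e ∈ B, e.2 = v) (hC : ∀ e ∈ C, ¬ IsBelow (edgeSegment f e) {f v} ∧ e.2 ≠ v)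
    (hR : ∀ e, e ∈ R ↔ G.Adj e.1 e.2 ∧ e.1 = v ∧ v < e.2)
    (hRsorted : R.Pairwise fun e e' ↦ IsBelow (edgeSegment f e) (edgeSegment f e')) :
    IsSweepState G f (insert v P) (A ++ R ++ C) := by
  have hmem := hL.mem_iff
  have hsorted := hL.pairwise_isBelow
  simp only [List.mem_append] at hmem
  have hv : ∀ e ∈ R, f v ∈ edgeSegment f e := fun e he ↦
    ((hR e).1 he).2.1 ▸ left_mem_segment ℝ _ _
  refine ⟨fun e ↦ ?_, ?_⟩
  · simp only [List.mem_append, Finset.mem_insert, hP] at hmem ⊢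
    grind
  · rw [List.append_assoc, List.pairwise_append] at hsorted ⊢
    rw [List.pairwise_append]
    obtain ⟨hAsorted, hBC, hAC⟩ := hsorted
    refine ⟨hAsorted, ⟨hRsorted, (List.pairwise_append.1 hBC).2.1, fun e he e' he' ↦ ?_⟩,
      fun e he e' he' ↦ ?_⟩
    · obtain h | ⟨q, hq, p, hp, h⟩ := hL.isBelow_singleton_or_isBelow hf hx hP
        (List.mem_append_right _ he') (hC e' he').2 (((hR e).1 he).2.1 ▸ ((hR e).1 he).1)
      · exact ((hC e' he').1 h).elim
      · obtain rfl : q = f v := hq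
        exact ⟨f v, hv e he, p, hp, h⟩
    · rcases List.mem_append.1 he' with he' | he'
      · obtain ⟨p, hp, h⟩ := isBelow_singleton.1 (hA e he).1
        exact ⟨p, hp, f v, hv e' he', h⟩
      · exact hAC e he e' (List.mem_append_right _ he')

include hf hx in
lemma exists_insert [Fintype V] [DecidableRel G.Adj] (hL : IsSweepState G f P L)
    (hP : ∀ u, u ∈ P ↔ u < v) :
    ∃ L' X Y Z r, IsSweepState G f (insert v P) L' ∧ L.map Prod.fst = X ++ Y ++ Z ∧
      L'.map Prod.fst = X ++ List.replicate r v ++ Z ∧ Y.Nodup ∧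
      Y.toFinset = leftNeighbors G v ∧ ((∀ u, (f v).2 ≤ (f u).2) → X = []) := by
  obtain ⟨A, B, C, rfl, hA, hB, hC⟩ := hL.exists_eq_append hf hx hP
  obtain ⟨R, hR, hRsorted⟩ := exists_right_fan hf hx v
  have hRfst : R.map Prod.fst = List.replicate R.length v :=
    List.eq_replicate_iff.2 ⟨by simp, by simp +contextual [hR]⟩
  refine ⟨A ++ R ++ C, A.map Prod.fst, B.map Prod.fst, C.map Prod.fst, R.length,
    hL.pass_vertex hf hx hP hA hB hC hR hRsorted, by simp, by simp [hRfst], ?_, ?_, fun hv ↦ ?_⟩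
  · have hBnodup : B.Nodup := (hL.nodup hf hx).of_append_left.of_append_right
    exact hBnodup.map_on fun e he e' he' h ↦ Prod.ext h ((hB e he).trans (hB e' he').symm)
  · ext u
    have hmem := hL.mem_iff (u, v)
    simp only [List.mem_append, hP, lt_irrefl, not_false_eq_true, and_true] at hmem
    rw [List.mem_toFinset, mem_leftNeighbors, ← hmem, List.mem_map]
    constructor
    · rintro ⟨e, he, rfl⟩
      exact .inl (.inr (hB e he ▸ he))
    · rintro ((h | h) | h)
      exacts [((hA _ h).2 rfl).elim, ⟨_, h, rfl⟩, ((hC _ h).2 rfl).elim]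
  · refine List.map_eq_nil_iff.2 (List.eq_nil_iff_forall_not_mem.2 fun e he ↦ ?_)
    obtain ⟨p, hp, -, hlt⟩ := isBelow_singleton.1 (hA e he).1
    have hconv : Convex ℝ {p : ℝ × ℝ | (f v).2 ≤ p.2} :=
      convex_halfSpace_ge (LinearMap.snd ℝ ℝ ℝ).isLinear _
    exact hlt.not_ge (hconv.segment_subset (hv e.1) (hv e.2) hp)

end IsSweepState

section Potential

variable [Fintype V] [DecidableRel G.Adj] {c : V → Bool} (hc : ∀ u v, G.Adj u v → c u ≠ c v)

include hf hx hc in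
lemma IsSweepState.exists_insert_colorLength_le {P : Finset V} {L : List (V × V)} {v : V}
    (hL : IsSweepState G f P L) (hP : ∀ u, u ∈ P ↔ u < v) :
    ∃ L', IsSweepState G f (insert v P) L' ∧ ∀ m a : V,
      (2 * (leftNeighbors G v).card + colorLength c (m :: (L'.map Prod.fst ++ [a])) ≤
        colorLength c (m :: (L.map Prod.fst ++ [a])) + 4) ∧
      ((∀ u, (f v).2 ≤ (f u).2) → c m = c v →
        2 * (leftNeighbors G v).card + colorLength c (v :: (L'.map Prod.fst ++ [a])) ≤
          colorLength c (m :: (L.map Prod.fst ++ [a])) + 2) := by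
  obtain ⟨L', X, Y, Z, r, hL', hLfst, hL'fst, hY, hYv, hX⟩ := hL.exists_insert hf hx hP
  have hYc : ∀ y ∈ Y, c y ≠ c v := fun y hy ↦
    hc y v (mem_leftNeighbors.1 (hYv ▸ List.mem_toFinset.2 hy)).1
  refine ⟨L', hL', fun m a ↦ ?_⟩
  rw [hLfst, hL'fst, ← hYv, List.toFinset_card_of_nodup hY]
  refine ⟨by linarith [colorLength_sweep_le hY hYc m a X Z r], fun hv hm ↦ ?_⟩
  rw [hX hv, List.nil_append, List.nil_append]
  linarith [colorLength_sweep_bottom_le hY hYc hm a Z r]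

variable {a b d : V} (ha : IsBot a)

include hf hx ha in
lemma exists_isSweepState_singleton : ∃ L, IsSweepState G f {a} L ∧
    2 * (leftNeighbors G a).card + colorLength c (a :: (L.map Prod.fst ++ [a])) = 0 := by
  have hempty : IsSweepState G f ∅ [] := ⟨by simp, .nil⟩
  obtain ⟨L, X, Y, Z, r, hL, hnil, hfst, -, hYa, -⟩ :=
    hempty.exists_insert hf hx (v := a) fun u ↦ by simpa using ha u
  obtain ⟨rfl, rfl, rfl⟩ : X = [] ∧ Y = [] ∧ Z = [] := by simpa using hnil.symm
  have hlength := colorLength_cons_replicate_append_le (c := c) a a a r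
  refine ⟨L, hL, ?_⟩
  rw [hfst, ← hYa]
  simpa [colorDist_self] using hlength

variable (hab : a ≠ b) (hb : ∀ v, (f b).2 ≤ (f v).2) (hcab : c a = c b)

-- The first vertex contributes no length, which saves `4`; the color of `b` saves `2`, since `b`
-- replaces `a` as the lower end of the sequence when the line passes it.
include hf hx hc ha hab hb hcab in
lemma exists_isSweepState_colorLength_le {P : Finset V} (hP : IsLowerSet (P : Set V))
    (haP : a ∈ P) : ∃ L, IsSweepState G f P L ∧
      2 * ∑ v ∈ P, (leftNeighbors G v).card +
        colorLength c ((if b ∈ P then b else a) :: (L.map Prod.fst ++ [a])) +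
        (if b ∈ P then 2 else 0) + 4 ≤ 4 * P.card := by
  induction P using Finset.induction_on_max with
  | empty => simp at haP
  | insert v P hPv ih =>
    have hvP : v ∉ P := fun h ↦ (hPv v h).false
    have hlt (u : V) : u ∈ P ↔ u < v := ⟨hPv u, fun huv ↦
      (Finset.mem_insert.1 (hP huv.le (Finset.mem_insert_self v P))).resolve_left huv.ne⟩
    rcases eq_or_ne v a with rfl | hva
    · obtain rfl : P = ∅ :=
        Finset.eq_empty_of_forall_notMem fun u hu ↦ (ha u).not_gt (hPv u hu)
      obtain ⟨L, hL, hzero⟩ := exists_isSweepState_singleton (c := c) hf hx ha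
      exact ⟨L, hL, by simp_all [hab.symm]⟩
    have hP' : IsLowerSet (P : Set V) := fun u w hwu hu ↦
      (hlt w).2 (hwu.trans_lt ((hlt u).1 hu))
    obtain ⟨L, hL, hle⟩ := ih hP' ((hlt a).2 ((ha v).lt_of_ne hva.symm))
    obtain ⟨L', hL', hstep⟩ := hL.exists_insert_colorLength_le hf hx hc hlt
    refine ⟨L', hL', ?_⟩
    rw [Finset.sum_insert hvP, Finset.card_insert_of_notMem hvP]
    rcases eq_or_ne b v with rfl | hbv
    · have := (hstep a a).2 hb hcab
      simp only [hvP, if_false, Finset.mem_insert_self, if_true] at hle ⊢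
      omega
    · have := (hstep (if b ∈ P then b else a) a).1
      simp only [Finset.mem_insert, hbv, false_or]
      omega

omit [DecidableRel G.Adj] in
include hf hx hc ha hab hb hcab in
theorem IsPlaneDrawing.card_edgeFinset_add_five_le_of_strictMono [Fintype G.edgeSet] (hd : IsTop d)
    (hbd : b ≠ d) (hcad : c a = c d) : G.edgeFinset.card + 5 ≤ 2 * Fintype.card V := by
  classical
  have had : a ≠ d := fun h ↦ hab ((ha b).antisymm (h ▸ hd b))
  have hlt (u : V) : u ∈ Finset.univ.erase d ↔ u < d := by
    simp [(hd u).lt_iff_ne]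
  obtain ⟨L, hL, hle⟩ := exists_isSweepState_colorLength_le hf hx hc ha hab hb hcab
    (P := Finset.univ.erase d) (fun u w hwu hu ↦ (hlt w).2 (hwu.trans_lt ((hlt u).1 hu)))
    ((hlt a).2 ((ha d).lt_of_ne had))
  obtain ⟨L', X, Y, Z, r, hL', hLfst, hL'fst, hY, hYd, -⟩ := hL.exists_insert hf hx hlt
  have hL'nil : L' = [] := List.eq_nil_iff_forall_not_mem.2 fun e he ↦ by
    simpa using ((hL'.mem_iff e).1 he).2.2
  obtain ⟨rfl, -, rfl⟩ : X = [] ∧ r = 0 ∧ Z = [] := by simpa [hL'nil] using hL'fst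
  have hYc : ∀ y ∈ Y, c y ≠ c d := fun y hy ↦
    hc y d (mem_leftNeighbors.1 (hYd ▸ List.mem_toFinset.2 hy)).1
  have hlast := two_mul_length_le_colorLength hY hYc (hcab.symm.trans hcad) hcad
  have hsum := Finset.add_sum_erase Finset.univ (fun v ↦ (leftNeighbors G v).card)
    (Finset.mem_univ d)
  have hcard := Finset.card_erase_add_one (Finset.mem_univ d)
  rw [← hYd, List.toFinset_card_of_nodup hY] at hsum
  have hbP : b ∈ Finset.univ.erase d := Finset.mem_erase_of_ne_of_mem hbd (Finset.mem_univ b)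
  rw [hLfst, List.nil_append, List.append_nil, if_pos hbP, if_pos hbP] at hle
  rw [card_edgeFinset_eq_sum_card_leftNeighbors, Fintype.card]
  omega

end Potential

end Sweep

section Coordinates

lemma exists_mem_forall_le_or_forall_ge {α β : Type*} [LinearOrder β] {S : Finset α}
    (hS : 2 < S.card) {A C : α} {h : α → β} (hAC : h A = h C) :
    ∃ B ∈ S, B ≠ A ∧ B ≠ C ∧ ((∀ p ∈ S, h B ≤ h p) ∨ ∀ p ∈ S, h p ≤ h B) := by
  classical
  have hne : (S \ {A, C}).Nonempty :=
    Finset.sdiff_nonempty_of_card_lt_card (Finset.card_le_two.trans_lt hS)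
  obtain ⟨B, hB, hmin⟩ := Finset.exists_min_image _ h hne
  obtain ⟨B', hB', hmax⟩ := Finset.exists_max_image _ h hne
  simp only [Finset.mem_sdiff, Finset.mem_insert, Finset.mem_singleton, not_or] at hB hB' hmin hmax
  rcases le_total (h B) (h A) with hBA | hBA
  · refine ⟨B, hB.1, hB.2.1, hB.2.2, .inl fun p hp ↦ ?_⟩
    grind
  · refine ⟨B', hB'.1, hB'.2.1, hB'.2.2, .inr fun p hp ↦ ?_⟩
    have := hmin B' hB'
    grind

lemma exists_apply_eq_zero_ker_inf_ker_eq_bot {t : ℝ × ℝ →ₗ[ℝ] ℝ} {w : ℝ × ℝ} (hw : t w ≠ 0) :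
    ∃ h : ℝ × ℝ →ₗ[ℝ] ℝ, h w = 0 ∧ LinearMap.ker t ⊓ LinearMap.ker h = ⊥ := by
  refine ⟨w.1 • LinearMap.snd ℝ ℝ ℝ - w.2 • LinearMap.fst ℝ ℝ ℝ, by simp [mul_comm], ?_⟩
  refine (Submodule.eq_bot_iff _).2 fun p ⟨(htp : t p = 0), hhp⟩ ↦ ?_
  have hp : w.1 * p.2 = w.2 * p.1 := sub_eq_zero.1 hhp
  have h₁ : p.1 • w = w.1 • p := Prod.ext (mul_comm _ _) (by simp [hp, mul_comm])
  have h₂ : p.2 • w = w.2 • p := Prod.ext (by simp [← hp, mul_comm]) (mul_comm _ _)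
  have h₁' := congr_arg t h₁
  have h₂' := congr_arg t h₂
  simp only [map_smul, htp, smul_eq_mul, mul_zero, mul_eq_zero, hw, or_false] at h₁' h₂'
  exact Prod.ext h₁' h₂'

lemma exists_linearMap_injOn (S : Finset (ℝ × ℝ)) :
    ∃ t : ℝ × ℝ →ₗ[ℝ] ℝ, Set.InjOn t S := by
  obtain ⟨t, ht⟩ := Module.exists_dual_forall_apply_ne_zero (K := ℝ)
    (fun e : S.offDiag ↦ e.1.1 - e.1.2) fun e ↦
      sub_ne_zero.2 (Finset.mem_offDiag.1 e.2).2.2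
  refine ⟨t, fun p hp q hq hpq ↦ by_contra fun hne ↦ ?_⟩
  exact ht ⟨(p, q), Finset.mem_offDiag.2 ⟨hp, hq, hne⟩⟩ (by simp [hpq])

lemma exists_linearMap_extreme_points (S : Finset (ℝ × ℝ)) (hS : 2 < S.card) :
    ∃ T : ℝ × ℝ →ₗ[ℝ] ℝ × ℝ, Function.Injective T ∧ Set.InjOn (fun p ↦ (T p).1) S ∧
      ∃ A ∈ S, ∃ B ∈ S, ∃ C ∈ S, B ≠ A ∧ B ≠ C ∧
        ∀ p ∈ S, (T A).1 ≤ (T p).1 ∧ (T p).1 ≤ (T C).1 ∧ (T B).2 ≤ (T p).2 := by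
  obtain ⟨t, ht⟩ := exists_linearMap_injOn S
  have hne : S.Nonempty := Finset.card_pos.1 (by omega)
  obtain ⟨A, hA, hmin⟩ := Finset.exists_min_image S t hne
  obtain ⟨C, hC, hmax⟩ := Finset.exists_max_image S t hne
  have htAC : t (C - A) ≠ 0 := by
    obtain ⟨p, hp, q, hq, hpq⟩ := Finset.one_lt_card.1 (by omega : 1 < S.card)
    intro h
    rw [map_sub, sub_eq_zero] at h
    have heq (r) (hr : r ∈ S) : t r = t A := ((hmax r hr).trans_eq h).antisymm (hmin r hr)
    exact hpq (ht hp hq ((heq p hp).trans (heq q hq).symm))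
  obtain ⟨h, hAC, hker⟩ := exists_apply_eq_zero_ker_inf_ker_eq_bot htAC
  rw [map_sub, sub_eq_zero] at hAC
  obtain ⟨B, hB, hBA, hBC, hlow | hhigh⟩ := exists_mem_forall_le_or_forall_ge hS hAC.symm
  · have hinj : Function.Injective (t.prod h) :=
      LinearMap.ker_eq_bot.1 (by rw [LinearMap.ker_prod, hker])
    exact ⟨_, hinj, ht, A, hA, B, hB, C, hC, hBA, hBC,
      fun p hp ↦ ⟨hmin p hp, hmax p hp, hlow p hp⟩⟩
  · have hinj : Function.Injective (t.prod (-h)) :=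
      LinearMap.ker_eq_bot.1 (by rw [LinearMap.ker_prod, LinearMap.ker_neg, hker])
    exact ⟨_, hinj, ht, A, hA, B, hB, C, hC, hBA, hBC,
      fun p hp ↦ ⟨hmin p hp, hmax p hp, neg_le_neg (hhigh p hp)⟩⟩

end Coordinates

section Quadrangulation

variable {V : Type*} [Fintype V] {G : SimpleGraph V} [Fintype G.edgeSet]

theorem IsPlaneDrawing.card_edgeFinset_add_five_le {f : V → ℝ × ℝ} (hf : IsPlaneDrawing G f)
    {c : V → Bool} (hc : ∀ u v, G.Adj u v → c u ≠ c v) {T : ℝ × ℝ →ₗ[ℝ] ℝ × ℝ}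
    (hT : Function.Injective T) (hTf : Function.Injective fun v ↦ (T (f v)).1) {a b d : V}
    (hba : b ≠ a) (hbd : b ≠ d)
    (hext : ∀ v, (T (f a)).1 ≤ (T (f v)).1 ∧ (T (f v)).1 ≤ (T (f d)).1 ∧
      (T (f b)).2 ≤ (T (f v)).2) (hcab : c a = c b) (hcad : c a = c d) :
    G.edgeFinset.card + 5 ≤ 2 * Fintype.card V := by
  classical
  let : LinearOrder V := LinearOrder.lift' _ hTf
  exact (hf.comp T hT).card_edgeFinset_add_five_le_of_strictMono (fun _ _ h ↦ h) hc
    (fun v ↦ (hext v).1) hba.symm (fun v ↦ (hext v).2.2) hcab (fun v ↦ (hext v).2.1) hbd hcad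

lemma exists_coloring_forall_not_isPlaneDrawing
    (hedges : 2 * Fintype.card V ≤ G.edgeFinset.card + 4) {c : V → Bool}
    (hc : ∀ u v, G.Adj u v → c u ≠ c v)
    (hthree : 3 ≤ (Finset.univ.filter fun v ↦ c v = true).card)
    {S : Finset (ℝ × ℝ)} (hS : S.card = Fintype.card V) :
    ∃ col : ℝ × ℝ → Bool,
      (S.filter fun p ↦ col p = true).card = (Finset.univ.filter fun v ↦ c v = true).card ∧
      ¬ ∃ f : V → ℝ × ℝ, IsPlaneDrawing G f ∧ Set.range f = ↑S ∧ ∀ v, col (f v) = c v := by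
  have hle : (Finset.univ.filter fun v ↦ c v = true).card ≤ S.card := hS ▸ Finset.card_le_univ _
  obtain ⟨T, hT, hTS, A, hA, B, hB, C, hC, hBA, hBC, hext⟩ :=
    exists_linearMap_extreme_points S (by omega)
  obtain ⟨K, hABC, hKS, hK⟩ := Finset.exists_subsuperset_card_eq (s := {A, B, C}) (t := S)
    (by simp [Finset.insert_subset_iff, hA, hB, hC]) (Finset.card_le_three.trans hthree) hle
  refine ⟨fun p ↦ decide (p ∈ K), ?_, ?_⟩
  · simp [Finset.filter_mem_eq_inter, Finset.inter_eq_right.2 hKS, hK]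
  · rintro ⟨f, hf, hrange, hcol⟩
    have hmem (v : V) : f v ∈ S := Finset.mem_coe.1 (hrange ▸ Set.mem_range_self v)
    have htrue {v : V} (hv : f v ∈ ({A, B, C} : Finset (ℝ × ℝ))) : c v = true :=
      (hcol v).symm.trans (decide_eq_true (hABC hv))
    obtain ⟨a, rfl⟩ : A ∈ Set.range f := hrange ▸ hA
    obtain ⟨b, rfl⟩ : B ∈ Set.range f := hrange ▸ hB
    obtain ⟨d, rfl⟩ : C ∈ Set.range f := hrange ▸ hC
    have ha : c a = true := htrue (by simp)
    have hcount := hf.card_edgeFinset_add_five_le hc hT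
      (fun u v huv ↦ hf.1 (hTS (hmem u) (hmem v) huv)) (ne_of_apply_ne f hBA)
      (ne_of_apply_ne f hBC) (fun v ↦ hext (f v) (hmem v)) (ha.trans (htrue (by simp)).symm)
      (ha.trans (htrue (by simp)).symm)
    omega

theorem quadrangulation_not_embeddable_general (hcard : 5 ≤ Fintype.card V)
    (hbip : ∃ c : V → Bool, ∀ u v, G.Adj u v → c u ≠ c v)
    (hedges : 2 * Fintype.card V ≤ G.edgeFinset.card + 4)
    (S : Finset (ℝ × ℝ)) (hS : S.card = Fintype.card V) :
    ∃ (c : V → Bool) (col : ℝ × ℝ → Bool),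
      (∀ u v, G.Adj u v → c u ≠ c v) ∧
      (S.filter (fun p => col p = true)).card
        = (Finset.univ.filter (fun v => c v = true)).card ∧
      ¬ ∃ f : V → ℝ × ℝ, IsPlaneDrawing G f ∧ Set.range f = ↑S ∧
        ∀ v, col (f v) = c v := by
  obtain ⟨c, hc, hthree⟩ : ∃ c : V → Bool, (∀ u v, G.Adj u v → c u ≠ c v) ∧
      3 ≤ (Finset.univ.filter fun v ↦ c v = true).card := by
    obtain ⟨c, hc⟩ := hbip
    have hsum := Finset.card_filter_add_card_filter_not (s := Finset.univ) (fun v ↦ c v = true)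
    rw [Finset.card_univ] at hsum
    rcases le_or_gt 3 (Finset.univ.filter fun v ↦ c v = true).card with h | h
    · exact ⟨c, hc, h⟩
    · refine ⟨fun v ↦ !c v, fun u v huv ↦ by simpa using hc u v huv, ?_⟩
      simp only [Bool.not_eq_true, Bool.not_eq_true'] at hsum ⊢
      omega
  obtain ⟨col, hcol, hnot⟩ := exists_coloring_forall_not_isPlaneDrawing hedges hc hthree hS
  exact ⟨c, col, hc, hcol, hnot⟩

end Quadrangulation

/-- Let `G` be a bipartite planar quadrangulation on at least 5 vertices:
`G` is connected, properly 2-colorable, has a plane straight-line drawing, and has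
`2|V| - 4` edges (Euler's formula characterization of a quadrangulation: every face of
every planar drawing is a quadrilateral). Then for every set `S` of `|V|` points in
general position there is a proper 2-coloring `c` of `G` and a compatible 2-coloring
`col` of `S` (the color classes have equal sizes) such that `G` has no straight-line
plane embedding on `S` mapping each vertex to a distinct point of its color. -/
theorem quadrangulation_not_embeddable {V : Type*} [Fintype V] [DecidableEq V]
    (G : SimpleGraph V) [DecidableRel G.Adj]
    (hcard : 5 ≤ Fintype.card V)
    (hconn : G.Connected)
    (hbip : ∃ c : V → Bool, ∀ u v, G.Adj u v → c u ≠ c v)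
    (hplanar : ∃ g : V → ℝ × ℝ, IsPlaneDrawing G g)
    (hquad : G.edgeFinset.card = 2 * Fintype.card V - 4)
    (S : Finset (ℝ × ℝ)) (hS : S.card = Fintype.card V)
    (hgp : ∀ p ∈ S, ∀ q ∈ S, ∀ r ∈ S, p ≠ q → p ≠ r → q ≠ r →
      ¬ Collinear ℝ ({p, q, r} : Set (ℝ × ℝ))) :
    ∃ (c : V → Bool) (col : ℝ × ℝ → Bool),
      (∀ u v, G.Adj u v → c u ≠ c v) ∧
      (S.filter (fun p => col p = true)).card
        = (Finset.univ.filter (fun v => c v = true)).card ∧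
      ¬ ∃ f : V → ℝ × ℝ, IsPlaneDrawing G f ∧ Set.range f = ↑S ∧
        ∀ v, col (f v) = c v :=
  quadrangulation_not_embeddable_general hcard hbip (by omega) S hS
end
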